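/- Let ρ_0, ρ_1 : ℝ^d → [0,1] be measurable functions with compact support and equal positive integrals. Let ψ : ℝ^d → ℝ be convex and T : ℝ^d → ℝ^d a Borel map such that ψ is differentiable at Lebesgue-a.e. x with ∇ψ(x) = T(x), and T_#(ρ_0 dx) = ρ_1 dx; let μ_t = ((1−t)·id + t·T)_#(ρ_0 dx) for t ∈ [0,1]. Then there exist measurable functions ρ : ℝ^d × [0,1] → [0,1] and v : ℝ^d × [0,1] → ℝ^d such that ρ(·,t) dx = μ_t for every t ∈ [0,1], the total action satisfies ∫_0^1 ∫_{ℝ^d} ρ |v|² dx dt = d_W(ρ_0 dx, ρ_1 dx)² < ∞, and (ρ, v) is a weak solution of the pressureless Euler system on ℝ^d × (0,1): for every smooth test function q compactly supported in ℝ^d × (0,1), ∫_0^1 ∫_{ℝ^d} ρ (∂_t q + v·∇q) dx dt = 0, and for every smooth vector-valued test function ṽ compactly supported in ℝ^d × (0,1), ∫_0^1 ∫_{ℝ^d} ρ v·(∂_t ṽ + (v·∇)ṽ) dx dt = 0. -/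

import Mathlib

open Set MeasureTheory
open scoped ENNReal RealInnerProductSpace

/-- The squared quadratic Wasserstein cost between two measures on `ℝ^d`: the infimum
over couplings of the integral of `|x − y|²`. -/
noncomputable def W2sq {d : ℕ}
    (μ ν : Measure (EuclideanSpace ℝ (Fin d))) : ℝ≥0∞ :=
  sInf { C | ∃ π : Measure (EuclideanSpace ℝ (Fin d) × EuclideanSpace ℝ (Fin d)),
    π.map Prod.fst = μ ∧ π.map Prod.snd = ν ∧
    C = ∫⁻ q, ENNReal.ofReal (‖q.1 - q.2‖ ^ 2) ∂π }

/-!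
In Minty's coordinate `z = x + ∇ψ(x)` the graph of `∇ψ` becomes the graph of a `1`-Lipschitz map:
`x = J z` and `∇ψ(x) = z - J z`. The derivative `A` of `J` is symmetric with `0 ≤ A ≤ 1`, hence
diagonalizable, and the interpolant at time `t` is `z ↦ (1 - t) J z + t (z - J z)`, with Jacobian
`(1 - t) A + t (1 - A)`. By weighted AM-GM the determinant of this matrix is at least the smaller of
`det A` and `det (1 - A)`, so by the area formula an upper bound on the densities at times `0` and
`1` is an upper bound at every intermediate time.

Monotonicity of `∇ψ` keeps distinct straight trajectories from meeting at times `0 < t < 1`. So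
there is a velocity field that is constant along each trajectory, and both weak equations say that
the derivative of a test function along a trajectory, multiplied by a constant of the motion,
integrates to zero. Optimality of the plan carried by the graph of `∇ψ` is Kantorovich duality with
the potentials `‖x‖² - 2 ψ(x)` and `‖y‖² - 2 ψ*(y)`.
-/

open Filter Topology ProbabilityTheory

section Subdifferential

variable {E : Type*} [NormedAddCommGroup E] [InnerProductSpace ℝ E]

/-- The graph of the subdifferential of a convex function, encoded as the set of pairs `(x, p)`
with `p` a subgradient of `ψ` at `x`. -/
def subdifferential (ψ : E → ℝ) : Set (E × E) :=
  {q | ∀ y, ψ q.1 + ⟪q.2, y - q.1⟫ ≤ ψ y}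

/-- Monotone operators, encoded by their graphs. -/
def IsMonotoneGraph (M : Set (E × E)) : Prop :=
  ∀ p ∈ M, ∀ q ∈ M, 0 ≤ ⟪p.1 - q.1, p.2 - q.2⟫

/-- `J` is the resolvent `(1 + ∂ψ)⁻¹` of the subdifferential of `ψ`, also known as the proximal
map of `ψ`. It parametrizes the graph of `∂ψ` by Minty's coordinate `z = x + p`. -/
def IsResolvent (ψ : E → ℝ) (J : E → E) : Prop :=
  ∀ z, (J z, z - J z) ∈ subdifferential ψ

/-- The potential of the resolvent `J` of `∂ψ`. By Fenchel's equality it is the convex conjugate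
of `ψ + ‖·‖² / 2`. -/
noncomputable def resolventPotential (ψ : E → ℝ) (J : E → E) (z : E) : ℝ :=
  ⟪J z, z⟫ - ‖J z‖ ^ 2 / 2 - ψ (J z)

variable {ψ : E → ℝ} {J : E → E}

lemma mem_subdifferential_of_hasGradientAt [CompleteSpace E] (hψ : ConvexOn ℝ univ ψ) {x p : E}
    (h : HasGradientAt ψ p x) : (x, p) ∈ subdifferential ψ := by
  intro y
  have hderiv : HasDerivAt (ψ ∘ AffineMap.lineMap x y) ⟪p, y - x⟫ (0 : ℝ) := by
    have hψ' : HasFDerivAt ψ (InnerProductSpace.toDual ℝ E p) (AffineMap.lineMap x y (0 : ℝ)) := by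
      simpa using h.hasFDerivAt
    simpa using hψ'.comp_hasDerivAt (0 : ℝ) AffineMap.hasDerivAt_lineMap
  have hslope := (hψ.comp_affineMap (AffineMap.lineMap x y)).le_slope_of_hasDerivAt
    (mem_univ 0) (mem_univ 1) zero_lt_one hderiv
  simp only [slope, Function.comp_apply, AffineMap.lineMap_apply_zero,
    AffineMap.lineMap_apply_one, vsub_eq_sub, sub_zero, inv_one, one_smul] at hslope
  linarith

lemma isMonotoneGraph_subdifferential (ψ : E → ℝ) : IsMonotoneGraph (subdifferential ψ) := by
  intro p hp q hq
  have hpq := hp q.1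
  have hqp := hq p.1
  rw [← neg_sub p.1 q.1, inner_neg_right] at hpq
  rw [real_inner_comm, inner_sub_left]
  linarith

lemma isClosed_subdifferential (hψ : Continuous ψ) : IsClosed (subdifferential ψ) := by
  simp only [subdifferential, ofPred_forall]
  exact isClosed_iInter fun y ↦ isClosed_le (by fun_prop) continuous_const

lemma mem_subdifferential_of_forall_add_norm_sub_sq_le (hψ : ConvexOn ℝ univ ψ) {x z : E}
    (hx : ∀ y, ψ x + ‖x - z‖ ^ 2 / 2 ≤ ψ y + ‖y - z‖ ^ 2 / 2) :
    (x, z - x) ∈ subdifferential ψ := by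
  intro y
  have hle : ∀ s ∈ Ioc (0 : ℝ) 1, ψ x + ⟪z - x, y - x⟫ ≤ ψ y + s * (‖y - x‖ ^ 2 / 2) := by
    rintro s ⟨hs, hs1⟩
    have hmin := hx (x + s • (y - x))
    have hconv := hψ.2 (mem_univ x) (mem_univ y) (sub_nonneg.2 hs1) hs.le (by ring)
    have hsegment : (1 - s) • x + s • y = x + s • (y - x) := by module
    have hnorm : ‖x + s • (y - x) - z‖ ^ 2
        = ‖x - z‖ ^ 2 - 2 * s * ⟪z - x, y - x⟫ + s ^ 2 * ‖y - x‖ ^ 2 := by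
      rw [show x + s • (y - x) - z = s • (y - x) - (z - x) by abel, norm_sub_sq_real,
        real_inner_smul_left, norm_smul, Real.norm_eq_abs, mul_pow, sq_abs,
        real_inner_comm (z - x), norm_sub_rev z x]
      ring
    rw [hsegment, smul_eq_mul, smul_eq_mul] at hconv
    refine le_of_mul_le_mul_left ?_ hs
    linarith
  have hlim : Tendsto (fun s : ℝ ↦ ψ y + s * (‖y - x‖ ^ 2 / 2)) (𝓝[>] 0) (𝓝 (ψ y)) :=
    (Continuous.tendsto' (by fun_prop) _ _ (by simp)).mono_left nhdsWithin_le_nhds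
  exact ge_of_tendsto hlim (eventually_of_mem (Ioc_mem_nhdsGT zero_lt_one) hle)

lemma exists_isResolvent [FiniteDimensional ℝ E] (hψ : ConvexOn ℝ univ ψ)
    (hne : (subdifferential ψ).Nonempty) : ∃ J, IsResolvent ψ J := by
  obtain ⟨⟨x₀, p⟩, h₀⟩ := hne
  have hψ_cont : Continuous ψ := continuousOn_univ.1 (hψ.continuousOn isOpen_univ)
  have hmin : ∀ z, ∃ x, ∀ y, ψ x + ‖x - z‖ ^ 2 / 2 ≤ ψ y + ‖y - z‖ ^ 2 / 2 := by
    intro z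
    have hcoercive : ∀ y, ψ x₀ + ⟪p, z - x₀⟫ - ‖p‖ ^ 2 / 2 + dist y (z - p) ^ 2 / 2
        ≤ ψ y + ‖y - z‖ ^ 2 / 2 := by
      intro y
      have hsub : ψ x₀ + ⟪p, y - x₀⟫ ≤ ψ y := h₀ y
      have hsq : ‖y - (z - p)‖ ^ 2 = ‖y - z‖ ^ 2 + 2 * ⟪p, y - z⟫ + ‖p‖ ^ 2 := by
        rw [← sub_add, norm_add_sq_real, real_inner_comm p]
      have hinner : ⟪p, y - x₀⟫ = ⟪p, y - z⟫ + ⟪p, z - x₀⟫ := by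
        rw [← inner_add_right, sub_add_sub_cancel]
      rw [dist_eq_norm, hsq]
      linarith
    have htop : Tendsto (fun y ↦ ψ y + ‖y - z‖ ^ 2 / 2) (cocompact E) atTop :=
      tendsto_atTop_mono hcoercive <| tendsto_const_nhds.add_atTop <|
        ((tendsto_pow_atTop two_ne_zero).comp
          (tendsto_dist_right_cocompact_atTop _)).atTop_div_const two_pos
    exact Continuous.exists_forall_le (by fun_prop) htop
  choose J hJ using hmin
  exact ⟨J, fun z ↦ mem_subdifferential_of_forall_add_norm_sub_sq_le hψ (hJ z)⟩

namespace IsResolvent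

lemma inner_sub_nonneg (hJ : IsResolvent ψ J) (z w : E) :
    0 ≤ ⟪J z - J w, (z - w) - (J z - J w)⟫ := by
  have h := isMonotoneGraph_subdifferential ψ _ (hJ z) _ (hJ w)
  rwa [sub_sub_sub_comm] at h

lemma norm_sub_sq_le (hJ : IsResolvent ψ J) (z w : E) :
    ‖J z - J w‖ ^ 2 ≤ ⟪J z - J w, z - w⟫ := by
  have h := hJ.inner_sub_nonneg z w
  rwa [inner_sub_right, real_inner_self_eq_norm_sq, sub_nonneg] at h

lemma lipschitzWith (hJ : IsResolvent ψ J) : LipschitzWith 1 J := by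
  refine LipschitzWith.mk_one fun z w ↦ ?_
  rw [dist_eq_norm, dist_eq_norm]
  by_contra! hlt
  have h := (hJ.norm_sub_sq_le z w).trans (real_inner_le_norm _ _)
  nlinarith [norm_nonneg (z - w)]

lemma apply_add (hJ : IsResolvent ψ J) {q : E × E} (hq : q ∈ subdifferential ψ) :
    J (q.1 + q.2) = q.1 := by
  have h := isMonotoneGraph_subdifferential ψ _ hq _ (hJ (q.1 + q.2))
  have hswap : q.2 - (q.1 + q.2 - J (q.1 + q.2)) = -(q.1 - J (q.1 + q.2)) := by abel
  rw [hswap, inner_neg_right, Left.nonneg_neg_iff, real_inner_self_nonpos, sub_eq_zero] at h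
  exact h.symm

lemma mem_subdifferential_resolventPotential (hJ : IsResolvent ψ J) (z : E) :
    (z, J z) ∈ subdifferential (resolventPotential ψ J) := by
  intro w
  have hsub : ψ (J w) + ⟪w - J w, J z - J w⟫ ≤ ψ (J z) := hJ w (J z)
  have hsq : 0 ≤ ‖J z - J w‖ ^ 2 := sq_nonneg _
  rw [norm_sub_sq_real] at hsq
  simp only [resolventPotential, inner_sub_left, inner_sub_right, real_inner_self_eq_norm_sq]
    at hsub ⊢
  rw [real_inner_comm (J z) w, real_inner_comm (J w) w, real_inner_comm (J z) (J w)] at hsub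
  linarith

end IsResolvent

end Subdifferential

section Differentiability

variable {E : Type*} [NormedAddCommGroup E] [InnerProductSpace ℝ E] {φ : E → ℝ} {J : E → E}

lemma hasFDerivAt_of_mem_subdifferential (h : ∀ z, (z, J z) ∈ subdifferential φ) {z : E}
    (hJ : ContinuousAt J z) : HasFDerivAt φ (innerSL ℝ (J z)) z := by
  refine HasFDerivAt.of_isLittleO (Asymptotics.isLittleO_iff.2 fun ε hε ↦ ?_)
  filter_upwards [Metric.tendsto_nhds.1 hJ ε hε] with w hw
  have hlower : φ z + ⟪J z, w - z⟫ ≤ φ w := h z w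
  have hupper : φ w + ⟪J w, z - w⟫ ≤ φ z := h w z
  have hinner : ⟪J w - J z, w - z⟫ ≤ ε * ‖w - z‖ := by
    rw [dist_eq_norm] at hw
    exact (real_inner_le_norm _ _).trans (by gcongr)
  rw [inner_sub_left] at hinner
  rw [← neg_sub w z, inner_neg_right] at hupper
  rw [innerSL_apply_apply, Real.norm_eq_abs, abs_of_nonneg (by linarith)]
  linarith

lemma isSymmetric_of_hasFDerivAt_of_mem_subdifferential (h : ∀ z, (z, J z) ∈ subdifferential φ)
    (hJ : Continuous J) {A : E →L[ℝ] E} {z : E} (hA : HasFDerivAt J A z) :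
    (A : E →ₗ[ℝ] E).IsSymmetric := by
  intro u w
  have hA' : HasFDerivAt (fun z ↦ innerSL ℝ (J z)) ((innerSL ℝ).comp A) z :=
    (innerSL ℝ).hasFDerivAt.comp z hA
  have hsymm := second_derivative_symmetric
    (fun z ↦ hasFDerivAt_of_mem_subdifferential h hJ.continuousAt) hA' u w
  simpa [real_inner_comm] using hsymm

lemma IsResolvent.isSymmetric_of_hasFDerivAt {ψ : E → ℝ} (hJ : IsResolvent ψ J)
    {A : E →L[ℝ] E} {z : E} (hA : HasFDerivAt J A z) : (A : E →ₗ[ℝ] E).IsSymmetric :=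
  isSymmetric_of_hasFDerivAt_of_mem_subdifferential hJ.mem_subdifferential_resolventPotential
    hJ.lipschitzWith.continuous hA

lemma IsResolvent.inner_fderiv_nonneg {ψ : E → ℝ} (hJ : IsResolvent ψ J)
    {A : E →L[ℝ] E} {z : E} (hA : HasFDerivAt J A z) (u : E) : 0 ≤ ⟪A u, u - A u⟫ := by
  have hslope : Tendsto (fun s : ℝ ↦ s⁻¹ • (J (z + s • u) - J z)) (𝓝[≠] 0) (𝓝 (A u)) :=
    (hA.hasLineDerivAt u).tendsto_slope_zero
  refine ge_of_tendsto (hslope.inner (tendsto_const_nhds.sub hslope)) ?_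
  filter_upwards [self_mem_nhdsWithin] with s (hs : s ≠ 0)
  have hscale : u - s⁻¹ • (J (z + s • u) - J z)
      = s⁻¹ • ((z + s • u - z) - (J (z + s • u) - J z)) := by
    rw [add_sub_cancel_left, smul_sub s⁻¹ (s • u), inv_smul_smul₀ hs]
  rw [hscale, real_inner_smul_left, real_inner_smul_right, ← mul_assoc]
  exact mul_nonneg (mul_self_nonneg _) (hJ.inner_sub_nonneg _ _)

end Differentiability

section Determinant

lemma det_eq_prod_of_apply_basis {R M ι : Type*} [CommRing R] [AddCommGroup M] [Module R M]
    [Fintype ι] (b : Module.Basis ι R M) {f : M →ₗ[R] M} {c : ι → R}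
    (h : ∀ i, f (b i) = c i • b i) : LinearMap.det f = ∏ i, c i := by
  classical
  have hdiag : LinearMap.toMatrix b b f = Matrix.diagonal c := by
    ext i j
    obtain rfl | hij := eq_or_ne i j
    · simp [LinearMap.toMatrix_apply, h]
    · simp [LinearMap.toMatrix_apply, h, hij]
  rw [← LinearMap.det_toMatrix b, hdiag, Matrix.det_diagonal]

lemma min_prod_le_prod_convex_comb {ι : Type*} (s : Finset ι) {a b : ι → ℝ}
    (ha : ∀ i ∈ s, 0 ≤ a i) (hb : ∀ i ∈ s, 0 ≤ b i) {t : ℝ} (ht : t ∈ Icc (0 : ℝ) 1) :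
    min (∏ i ∈ s, a i) (∏ i ∈ s, b i) ≤ ∏ i ∈ s, ((1 - t) * a i + t * b i) := by
  have ht' : 0 ≤ 1 - t := sub_nonneg.2 ht.2
  set m := min (∏ i ∈ s, a i) (∏ i ∈ s, b i)
  have hm : 0 ≤ m := le_min (Finset.prod_nonneg ha) (Finset.prod_nonneg hb)
  calc m = m ^ (1 - t) * m ^ t := by
        rw [← Real.rpow_add_of_nonneg hm ht' ht.1, sub_add_cancel, Real.rpow_one]
    _ ≤ (∏ i ∈ s, a i) ^ (1 - t) * (∏ i ∈ s, b i) ^ t :=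
        mul_le_mul (Real.rpow_le_rpow hm (min_le_left _ _) ht')
          (Real.rpow_le_rpow hm (min_le_right _ _) ht.1) (Real.rpow_nonneg hm _)
          (Real.rpow_nonneg (Finset.prod_nonneg ha) _)
    _ = ∏ i ∈ s, a i ^ (1 - t) * b i ^ t := by
        rw [Finset.prod_mul_distrib, Real.finsetProd_rpow _ _ ha, Real.finsetProd_rpow _ _ hb]
    _ ≤ ∏ i ∈ s, ((1 - t) * a i + t * b i) :=
        Finset.prod_le_prod
          (fun i hi ↦ mul_nonneg (Real.rpow_nonneg (ha i hi) _) (Real.rpow_nonneg (hb i hi) _))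
          fun i hi ↦ Real.geom_mean_le_arith_mean2_weighted ht' ht.1 (ha i hi) (hb i hi) (by ring)

lemma min_abs_det_le_abs_det_convex_comb {E : Type*} [NormedAddCommGroup E]
    [InnerProductSpace ℝ E] [FiniteDimensional ℝ E] {A : E →L[ℝ] E}
    (hA : (A : E →ₗ[ℝ] E).IsSymmetric) (hA_firm : ∀ u, 0 ≤ ⟪A u, u - A u⟫) {t : ℝ}
    (ht : t ∈ Icc (0 : ℝ) 1) :
    min |A.det| |(1 - A).det| ≤ |((1 - t) • A + t • (1 - A)).det| := by
  set b := hA.eigenvectorBasis rfl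
  set a := hA.eigenvalues rfl
  have hAb (i) : A (b i) = a i • b i := hA.apply_eigenvectorBasis rfl i
  have ha (i) : 0 ≤ a i ∧ 0 ≤ 1 - a i := by
    have h := hA_firm (b i)
    rw [hAb, inner_sub_right, real_inner_smul_left, real_inner_smul_right, real_inner_smul_left,
      real_inner_self_eq_norm_sq, b.norm_eq_one] at h
    constructor <;> nlinarith
  have hdet₀ : A.det = ∏ i, a i := det_eq_prod_of_apply_basis b.toBasis (by simp [hAb])
  have hdet₁ : (1 - A).det = ∏ i, (1 - a i) :=
    det_eq_prod_of_apply_basis b.toBasis (by simp [hAb, sub_smul])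
  have hdet : ((1 - t) • A + t • (1 - A)).det = ∏ i, ((1 - t) * a i + t * (1 - a i)) :=
    det_eq_prod_of_apply_basis b.toBasis
      (by simp [hAb, sub_smul, add_smul, mul_smul, smul_sub])
  rw [hdet₀, hdet₁, hdet, abs_of_nonneg (Finset.prod_nonneg fun i _ ↦ (ha i).1),
    abs_of_nonneg (Finset.prod_nonneg fun i _ ↦ (ha i).2)]
  exact (min_prod_le_prod_convex_comb _ (fun i _ ↦ (ha i).1) (fun i _ ↦ (ha i).2) ht).trans
    (le_abs_self _)

end Determinant

section AreaFormula

lemma measure_le_withDensity_inf {α : Type*} [MeasurableSpace α] {σ μ : Measure α}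
    {f g : α → ℝ≥0∞} (hf : Measurable f) (hg : Measurable g) (hσf : σ ≤ μ.withDensity f)
    (hσg : σ ≤ μ.withDensity g) : σ ≤ μ.withDensity (fun x ↦ min (f x) (g x)) := by
  have hfg : MeasurableSet {x | f x ≤ g x} := measurableSet_le hf hg
  refine Measure.le_iff.2 fun s hs ↦ ?_
  calc σ s = σ (s ∩ {x | f x ≤ g x}) + σ (s \ {x | f x ≤ g x}) :=
        (measure_inter_add_sdiff s hfg).symm
    _ ≤ μ.withDensity f (s ∩ {x | f x ≤ g x}) + μ.withDensity g (s \ {x | f x ≤ g x}) :=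
        add_le_add (hσf _) (hσg _)
    _ = μ.withDensity (fun x ↦ min (f x) (g x)) (s ∩ {x | f x ≤ g x})
        + μ.withDensity (fun x ↦ min (f x) (g x)) (s \ {x | f x ≤ g x}) := by
        simp only [withDensity_apply _ (hs.inter hfg), withDensity_apply _ (hs.diff hfg)]
        congr 1
        · exact setLIntegral_congr_fun (hs.inter hfg) fun x hx ↦ (min_eq_left hx.2).symm
        · exact setLIntegral_congr_fun (hs.diff hfg) fun x hx ↦
            (min_eq_right (not_le.1 hx.2).le).symm
    _ = μ.withDensity (fun x ↦ min (f x) (g x)) s := measure_inter_add_sdiff s hfg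

variable {E : Type*} [NormedAddCommGroup E] [NormedSpace ℝ E] [FiniteDimensional ℝ E]
  [MeasurableSpace E] [BorelSpace E] {μ : Measure E} [μ.IsAddHaarMeasure]

lemma measurable_ofReal_abs_det_fderiv (f : E → E) :
    Measurable fun x ↦ ENNReal.ofReal |(fderiv ℝ f x).det| :=
  (ContinuousLinearMap.continuous_det.measurable.comp
    (measurable_fderiv ℝ f)).abs.ennreal_ofReal

lemma addHaar_image_eq_zero_of_lipschitzWith {K : NNReal} {f : E → E} (hf : LipschitzWith K f)
    {s : Set E} (hs : μ s = 0) : μ (f '' s) = 0 := by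
  have hμ : μ ≪ μH[Module.finrank ℝ E] := Measure.absolutelyContinuous_isAddHaarMeasure _ _
  have hμ' : μH[Module.finrank ℝ E] ≪ μ := Measure.absolutelyContinuous_isAddHaarMeasure _ _
  refine hμ (nonpos_iff_eq_zero.1 ?_)
  simpa [hμ' hs] using hf.hausdorffMeasure_image_le (Nat.cast_nonneg (Module.finrank ℝ E)) s

lemma absolutelyContinuous_of_map_le_of_lipschitzWith {σ : Measure E} {K : NNReal} {f : E → E}
    (hf : LipschitzWith K f) (hmap : σ.map f ≤ μ) : σ ≪ μ := by
  intro s hs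
  refine nonpos_iff_eq_zero.1 ?_
  calc σ s ≤ σ.map f (f '' s) := Measure.le_map_apply_image hf.continuous.aemeasurable s
    _ ≤ μ (f '' s) := hmap _
    _ = 0 := addHaar_image_eq_zero_of_lipschitzWith hf hs

lemma le_withDensity_abs_det_fderiv_of_map_le {σ : Measure E} {f : E → E} (hf : Measurable f)
    (hdiff : ∀ᵐ x ∂μ, DifferentiableAt ℝ f x) (hσ : σ ≪ μ) (hmap : σ.map f ≤ μ) :
    σ ≤ μ.withDensity (fun x ↦ ENNReal.ofReal |(fderiv ℝ f x).det|) := by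
  refine Measure.le_iff.2 fun s hs ↦ ?_
  set D := {x | DifferentiableAt ℝ f x}
  have hD : MeasurableSet D := measurableSet_of_differentiableAt ℝ f
  calc σ s = σ (s ∩ D) :=
        measure_congr (inter_ae_eq_left_of_ae_eq_univ (eventuallyEq_univ.2 (hσ hdiff))).symm
    _ ≤ σ.map f (f '' (s ∩ D)) := Measure.le_map_apply_image hf.aemeasurable _
    _ ≤ μ (f '' (s ∩ D)) := hmap _
    _ ≤ ∫⁻ x in s ∩ D, ENNReal.ofReal |(fderiv ℝ f x).det| ∂μ :=
        addHaar_image_le_lintegral_abs_det_fderiv μ (hs.inter hD)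
          fun x hx ↦ hx.2.hasFDerivAt.hasFDerivWithinAt
    _ ≤ ∫⁻ x in s, ENNReal.ofReal |(fderiv ℝ f x).det| ∂μ := lintegral_mono_set inter_subset_left
    _ = _ := (withDensity_apply _ hs).symm

lemma map_le_of_le_withDensity_abs_det_fderiv {σ : Measure E} {f : E → E} (hf : Measurable f)
    (hinj : Function.Injective f) (hdiff : ∀ᵐ x ∂μ, DifferentiableAt ℝ f x)
    (hσ : σ ≤ μ.withDensity (fun x ↦ ENNReal.ofReal |(fderiv ℝ f x).det|)) :
    σ.map f ≤ μ := by
  refine Measure.le_iff.2 fun s hs ↦ ?_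
  set D := {x | DifferentiableAt ℝ f x}
  have hD : MeasurableSet D := measurableSet_of_differentiableAt ℝ f
  have hσD : ∀ᵐ x ∂σ, x ∈ D :=
    (hσ.absolutelyContinuous.trans (withDensity_absolutelyContinuous _ _)) hdiff
  calc σ.map f s = σ (f ⁻¹' s) := Measure.map_apply hf hs
    _ = σ (f ⁻¹' s ∩ D) :=
        measure_congr (inter_ae_eq_left_of_ae_eq_univ (eventuallyEq_univ.2 hσD)).symm
    _ ≤ ∫⁻ x in f ⁻¹' s ∩ D, ENNReal.ofReal |(fderiv ℝ f x).det| ∂μ :=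
        (hσ _).trans_eq (withDensity_apply _ ((hf hs).inter hD))
    _ = μ (f '' (f ⁻¹' s ∩ D)) :=
        lintegral_abs_det_fderiv_eq_addHaar_image μ ((hf hs).inter hD)
          (fun x hx ↦ hx.2.hasFDerivAt.hasFDerivWithinAt) hinj.injOn
    _ ≤ μ s := measure_mono (image_subset_iff.2 inter_subset_left)

end AreaFormula

section Displacement

/-- The position at time `t` of the particle travelling at constant speed from `q.1` at time `0`
to `q.2` at time `1`. -/
def displacement {E : Type*} [AddCommGroup E] [Module ℝ E] (t : ℝ) (q : E × E) : E :=
  (1 - t) • q.1 + t • q.2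

lemma displacement_zero {E : Type*} [AddCommGroup E] [Module ℝ E] :
    displacement (0 : ℝ) = (Prod.fst : E × E → E) := by
  ext q
  simp [displacement]

lemma displacement_one {E : Type*} [AddCommGroup E] [Module ℝ E] :
    displacement (1 : ℝ) = (Prod.snd : E × E → E) := by
  ext q
  simp [displacement]

variable {E : Type*} [NormedAddCommGroup E] [InnerProductSpace ℝ E]

@[fun_prop]
lemma continuous_displacement : Continuous fun p : ℝ × E × E ↦ displacement p.1 p.2 := by
  unfold displacement
  fun_prop

lemma IsMonotoneGraph.injOn_displacement {M : Set (E × E)} (hM : IsMonotoneGraph M) {t : ℝ}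
    (ht : t ∈ Ioo (0 : ℝ) 1) : InjOn (displacement t) M := by
  intro p hp q hq hpq
  have ht' : 0 < 1 - t := sub_pos.2 ht.2
  have hcross : (1 - t) • (p.1 - q.1) = -(t • (p.2 - q.2)) := by
    rw [← sub_eq_zero, ← sub_eq_zero.2 hpq, displacement, displacement]
    module
  have hfst : p.1 - q.1 = 0 := by
    have hnonpos : (1 - t) * ⟪p.1 - q.1, p.1 - q.1⟫ ≤ 0 := by
      rw [← real_inner_smul_right, hcross, inner_neg_right, real_inner_smul_right]
      exact neg_nonpos.2 (mul_nonneg ht.1.le (hM p hp q hq))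
    exact real_inner_self_nonpos.1 (nonpos_of_mul_nonpos_right hnonpos ht')
  have hsnd : p.2 - q.2 = 0 := by
    rw [hfst, smul_zero, zero_eq_neg] at hcross
    exact (smul_eq_zero.1 hcross).resolve_left ht.1.ne'
  exact Prod.ext (sub_eq_zero.1 hfst) (sub_eq_zero.1 hsnd)

variable [FiniteDimensional ℝ E] [MeasurableSpace E] [BorelSpace E] {μ : Measure E}
  [μ.IsAddHaarMeasure] {ψ : E → ℝ}

lemma IsResolvent.map_displacement_le {J : E → E} (hJ : IsResolvent ψ J) {σ : Measure E}
    (hfst : σ.map J ≤ μ) (hsnd : σ.map (fun z ↦ z - J z) ≤ μ) {t : ℝ} (ht : t ∈ Ioo (0 : ℝ) 1) :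
    σ.map (fun z ↦ displacement t (J z, z - J z)) ≤ μ := by
  have hJ_cont : Continuous J := hJ.lipschitzWith.continuous
  have hdiff : ∀ᵐ z ∂μ, DifferentiableAt ℝ J z := hJ.lipschitzWith.ae_differentiableAt
  have hac : σ ≪ μ := absolutelyContinuous_of_map_le_of_lipschitzWith hJ.lipschitzWith hfst
  have hσ := measure_le_withDensity_inf
    (measurable_ofReal_abs_det_fderiv J) (measurable_ofReal_abs_det_fderiv fun z ↦ z - J z)
    (le_withDensity_abs_det_fderiv_of_map_le hJ_cont.measurable hdiff hac hfst)
    (le_withDensity_abs_det_fderiv_of_map_le (by fun_prop)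
      (hdiff.mono fun z hz ↦ by fun_prop) hac hsnd)
  refine map_le_of_le_withDensity_abs_det_fderiv (by unfold displacement; fun_prop) ?_
    (hdiff.mono fun z hz ↦ by unfold displacement; fun_prop)
    (hσ.trans (withDensity_mono (hdiff.mono fun z hz ↦ ?_)))
  · intro z w hzw
    have h := (isMonotoneGraph_subdifferential ψ).injOn_displacement ht (hJ z) (hJ w) hzw
    simp only [Prod.mk.injEq] at h
    simpa [h.1] using h.2
  · have hA := hz.hasFDerivAt
    have hA₁ : HasFDerivAt (fun z ↦ z - J z) (1 - fderiv ℝ J z) z := (hasFDerivAt_id z).sub hA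
    have hA_t : HasFDerivAt (fun z ↦ displacement t (J z, z - J z))
        ((1 - t) • fderiv ℝ J z + t • (1 - fderiv ℝ J z)) z :=
      (hA.const_smul (1 - t)).add (hA₁.const_smul t)
    dsimp only
    rw [hA₁.fderiv, hA_t.fderiv, ← ENNReal.ofReal_min]
    exact ENNReal.ofReal_le_ofReal <| min_abs_det_le_abs_det_convex_comb
      (hJ.isSymmetric_of_hasFDerivAt hA) (hJ.inner_fderiv_nonneg hA) (Ioo_subset_Icc_self ht)

lemma map_displacement_le (hψ : ConvexOn ℝ univ ψ) {γ : Measure (E × E)}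
    (hγ : ∀ᵐ q ∂γ, q ∈ subdifferential ψ) (hfst : γ.map Prod.fst ≤ μ) (hsnd : γ.map Prod.snd ≤ μ)
    {t : ℝ} (ht : t ∈ Icc (0 : ℝ) 1) : γ.map (displacement t) ≤ μ := by
  obtain rfl | ht₀ := ht.1.eq_or_lt
  · rwa [displacement_zero]
  obtain rfl | ht₁ := ht.2.eq_or_lt
  · rwa [displacement_one]
  obtain rfl | hγ₀ := eq_or_ne γ 0
  · simpa using Measure.zero_le μ
  have : (ae γ).NeBot := ae_neBot.2 hγ₀
  obtain ⟨J, hJ⟩ := exists_isResolvent hψ hγ.exists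
  have hJ_cont : Continuous J := hJ.lipschitzWith.continuous
  have hmap {f : E → E} {g : E × E → E} (hf : Measurable f)
      (hfg : ∀ q ∈ subdifferential ψ, f (q.1 + q.2) = g q) :
      (γ.map fun q ↦ q.1 + q.2).map f = γ.map g := by
    rw [Measure.map_map hf (by fun_prop)]
    exact Measure.map_congr (hγ.mono hfg)
  rw [← hmap (f := fun z ↦ displacement t (J z, z - J z)) (by unfold displacement; fun_prop)
    fun q hq ↦ by rw [hJ.apply_add hq, add_sub_cancel_left]]
  refine hJ.map_displacement_le ?_ ?_ ⟨ht₀, ht₁⟩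
  · rwa [hmap hJ_cont.measurable fun q hq ↦ hJ.apply_add hq]
  · rwa [hmap (by fun_prop) fun q hq ↦ by rw [hJ.apply_add hq, add_sub_cancel_left]]

end Displacement

section MeasurableSelection

lemma exists_measurable_density_of_forall_le {α β : Type*} [MeasurableSpace α] [MeasurableSpace β]
    [MeasurableSpace.CountableOrCountablyGenerated α β] (κ : Kernel α β) [IsFiniteKernel κ]
    (m : Measure β) [SigmaFinite m] {I : Set α} (hκ : ∀ a ∈ I, κ a ≤ m) :
    ∃ ρ : β → α → ℝ, Measurable (fun z : β × α ↦ ρ z.1 z.2) ∧ (∀ x a, ρ x a ∈ Icc (0 : ℝ) 1) ∧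
      ∀ a ∈ I, m.withDensity (fun x ↦ ENNReal.ofReal (ρ x a)) = κ a := by
  -- Mathlib's jointly measurable kernel derivatives need a finite reference measure.
  let η : Kernel α β := Kernel.const α m.toFinite
  let g (a : α) (x : β) : ℝ≥0∞ := m.toFinite.rnDeriv m x * κ.rnDeriv η a x
  have hg : Measurable fun z : β × α ↦ g z.2 z.1 :=
    ((Measure.measurable_rnDeriv _ _).comp measurable_fst).mul
      ((Kernel.measurable_rnDeriv κ η).comp measurable_swap)
  have hg_density (a) (ha : a ∈ I) : m.withDensity (g a) = κ a := by
    have hac : κ a ≪ η a := (hκ a ha).absolutelyContinuous.trans (absolutelyContinuous_toFinite m)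
    calc m.withDensity (g a) = m.toFinite.withDensity (κ.rnDeriv η a) := by
          rw [← Measure.withDensity_rnDeriv_eq _ _ (toFinite_absolutelyContinuous m)]
          exact withDensity_mul m (Measure.measurable_rnDeriv _ _)
            (Kernel.measurable_rnDeriv_right κ η a)
      _ = Kernel.withDensity η (κ.rnDeriv η) a :=
          (Kernel.withDensity_apply η (Kernel.measurable_rnDeriv κ η) a).symm
      _ = κ a := Kernel.withDensity_rnDeriv_eq hac
  refine ⟨fun x a ↦ (min (g a x) 1).toReal, (hg.min measurable_const).ennreal_toReal,
    fun x a ↦ ⟨ENNReal.toReal_nonneg, ENNReal.toReal_le_of_le_ofReal zero_le_one (by simp)⟩,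
    fun a ha ↦ ?_⟩
  have hga : Measurable (g a) := hg.comp measurable_prodMk_right
  rw [← hg_density a ha]
  refine withDensity_congr_ae ?_
  have hle_one := Measure.rnDeriv_le_one_of_le ((hg_density a ha).trans_le (hκ a ha))
  filter_upwards [Measure.rnDeriv_withDensity m hga, hle_one] with x hx hx_one
  rw [hx, Pi.one_apply] at hx_one
  rw [min_eq_left hx_one, ENNReal.ofReal_toReal (ne_top_of_le_ne_top ENNReal.one_ne_top hx_one)]

variable {E : Type*} [NormedAddCommGroup E] [InnerProductSpace ℝ E] [MeasurableSpace E]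
  [BorelSpace E]

lemma IsMonotoneGraph.exists_measurable_velocity [CompleteSpace E] [SecondCountableTopology E]
    {M : Set (E × E)} (hM : IsMonotoneGraph M) (hM_meas : MeasurableSet M) :
    ∃ v : E → ℝ → E, Measurable (fun z : E × ℝ ↦ v z.1 z.2) ∧
      ∀ q ∈ M, ∀ t ∈ Ioo (0 : ℝ) 1, v (displacement t q) t = q.2 - q.1 := by
  let S : Set ((E × E) × ℝ) := M ×ˢ Ioo 0 1
  have : StandardBorelSpace S := (hM_meas.prod measurableSet_Ioo).standardBorel
  let f (p : S) : E × ℝ := (displacement p.1.2 p.1.1, p.1.2)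
  have hf : Continuous f := by fun_prop
  have hf_inj : Function.Injective f := by
    rintro ⟨⟨q, t⟩, hq, ht⟩ ⟨⟨q', t'⟩, hq', _⟩ h
    obtain ⟨hdisp, rfl⟩ := Prod.ext_iff.1 h
    obtain rfl := hM.injOn_displacement ht hq hq' hdisp
    rfl
  have hf_emb : MeasurableEmbedding f := hf.measurable.measurableEmbedding hf_inj
  obtain ⟨v, hv, hvf⟩ := hf_emb.exists_measurable_extend
    (g := fun p : S ↦ p.1.1.2 - p.1.1.1) (by fun_prop) fun _ ↦ ⟨0⟩
  exact ⟨fun x t ↦ v (x, t), hv, fun q hq t ht ↦ congr_fun hvf ⟨(q, t), hq, ht⟩⟩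

end MeasurableSelection

section EulerianDescription

variable {E : Type*} [NormedAddCommGroup E] [InnerProductSpace ℝ E] [MeasurableSpace E]

/-- The densities `ρ(·, t)` with respect to `μ` and the velocity field `v` describe, in Eulerian
coordinates, the motion in which the particles with initial and final positions distributed
according to the plan `γ` travel at constant speed along straight lines. -/
structure IsEulerianDescription (μ : Measure E) (γ : Measure (E × E)) (ρ : E → ℝ → ℝ)
    (v : E → ℝ → E) : Prop where
  measurable_density : Measurable fun z : E × ℝ ↦ ρ z.1 z.2
  measurable_velocity : Measurable fun z : E × ℝ ↦ v z.1 z.2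
  density_nonneg : ∀ x t, 0 ≤ ρ x t
  withDensity_eq : ∀ t ∈ Icc (0 : ℝ) 1,
    μ.withDensity (fun x ↦ ENNReal.ofReal (ρ x t)) = γ.map (displacement t)
  velocity_eq : ∀ᵐ q ∂γ, ∀ t ∈ Ioo (0 : ℝ) 1, v (displacement t q) t = q.2 - q.1

lemma exists_isEulerianDescription [FiniteDimensional ℝ E] [BorelSpace E] {μ : Measure E}
    [μ.IsAddHaarMeasure] {ψ : E → ℝ} (hψ : ConvexOn ℝ univ ψ) {γ : Measure (E × E)}
    [IsFiniteMeasure γ] (hγ : ∀ᵐ q ∂γ, q ∈ subdifferential ψ) (hfst : γ.map Prod.fst ≤ μ)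
    (hsnd : γ.map Prod.snd ≤ μ) :
    ∃ ρ v, IsEulerianDescription μ γ ρ v ∧ ∀ x t, ρ x t ≤ 1 := by
  have hψ_cont : Continuous ψ := continuousOn_univ.1 (hψ.continuousOn isOpen_univ)
  let κ : Kernel ℝ E :=
    (Kernel.id ×ₖ Kernel.const ℝ γ).map fun p : ℝ × E × E ↦ displacement p.1 p.2
  have hκ (t : ℝ) : κ t = γ.map (displacement t) := by
    rw [Kernel.map_apply _ continuous_displacement.measurable, Kernel.prod_apply, Kernel.id_apply,
      Kernel.const_apply, Measure.dirac_prod,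
      Measure.map_map continuous_displacement.measurable measurable_prodMk_left]
    rfl
  obtain ⟨ρ, hρ, hρ_mem, hρκ⟩ := exists_measurable_density_of_forall_le κ μ
    fun t ht ↦ (hκ t).trans_le (map_displacement_le hψ hγ hfst hsnd ht)
  obtain ⟨v, hv, hv_eq⟩ := (isMonotoneGraph_subdifferential ψ).exists_measurable_velocity
    (isClosed_subdifferential hψ_cont).measurableSet
  refine ⟨ρ, v, ⟨hρ, hv, fun x t ↦ (hρ_mem x t).1, fun t ht ↦ ?_, hγ.mono hv_eq⟩,
    fun x t ↦ (hρ_mem x t).2⟩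
  rw [hρκ t ht, hκ]

end EulerianDescription

section LagrangianCoordinates

lemma integrable_of_continuous_of_ae_mem_isCompact {X F : Type*} [TopologicalSpace X] [T2Space X]
    [MeasurableSpace X] [OpensMeasurableSpace X] [SecondCountableTopology X]
    [NormedAddCommGroup F] {μ : Measure X} [IsFiniteMeasureOnCompacts μ] {f : X → F}
    (hf : Continuous f) {K : Set X} (hK : IsCompact K) (hμK : ∀ᵐ x ∂μ, x ∈ K) : Integrable f μ := by
  rw [← Measure.restrict_eq_self_of_ae_mem hμK]
  exact hf.continuousOn.integrableOn_compact hK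

namespace IsEulerianDescription

variable {E : Type*} [NormedAddCommGroup E] [InnerProductSpace ℝ E] [MeasurableSpace E]
  {μ : Measure E} {γ : Measure (E × E)} {ρ : E → ℝ → ℝ} {v : E → ℝ → E} {t : ℝ}

lemma measurable_prodMk_velocity (h : IsEulerianDescription μ γ ρ v) (t : ℝ) :
    Measurable fun x ↦ (x, v x t) :=
  measurable_id.prodMk (h.measurable_velocity.comp measurable_prodMk_right)

variable [BorelSpace E] [SecondCountableTopology E]

lemma map_prodMk_velocity (h : IsEulerianDescription μ γ ρ v) (ht : t ∈ Ioo (0 : ℝ) 1) :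
    (μ.withDensity fun x ↦ ENNReal.ofReal (ρ x t)).map (fun x ↦ (x, v x t)) =
      γ.map fun q ↦ (displacement t q, q.2 - q.1) := by
  rw [h.withDensity_eq t (Ioo_subset_Icc_self ht),
    Measure.map_map (h.measurable_prodMk_velocity t) (by fun_prop)]
  refine Measure.map_congr (h.velocity_eq.mono fun q hq ↦ ?_)
  simp [hq t ht]

lemma lintegral_density_mul (h : IsEulerianDescription μ γ ρ v) (ht : t ∈ Ioo (0 : ℝ) 1)
    {G : E × E → ℝ≥0∞} (hG : Measurable G) :
    ∫⁻ x, ENNReal.ofReal (ρ x t) * G (x, v x t) ∂μ =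
      ∫⁻ q, G (displacement t q, q.2 - q.1) ∂γ := by
  have hv := h.measurable_prodMk_velocity t
  calc ∫⁻ x, ENNReal.ofReal (ρ x t) * G (x, v x t) ∂μ
      = ∫⁻ x, G (x, v x t) ∂μ.withDensity fun x ↦ ENNReal.ofReal (ρ x t) :=
        (lintegral_withDensity_eq_lintegral_mul _
          (h.measurable_density.comp measurable_prodMk_right).ennreal_ofReal (hG.comp hv)).symm
    _ = ∫⁻ z, G z ∂γ.map fun q ↦ (displacement t q, q.2 - q.1) := by
        rw [← h.map_prodMk_velocity ht, lintegral_map hG hv]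
    _ = ∫⁻ q, G (displacement t q, q.2 - q.1) ∂γ := lintegral_map hG (by fun_prop)

lemma integral_density_mul (h : IsEulerianDescription μ γ ρ v) (ht : t ∈ Ioo (0 : ℝ) 1)
    {G : E × E → ℝ} (hG : Measurable G) :
    ∫ x, ρ x t * G (x, v x t) ∂μ = ∫ q, G (displacement t q, q.2 - q.1) ∂γ := by
  have hρ : Measurable fun x ↦ ρ x t := h.measurable_density.comp measurable_prodMk_right
  have hv := h.measurable_prodMk_velocity t
  calc ∫ x, ρ x t * G (x, v x t) ∂μ
      = ∫ x, G (x, v x t) ∂μ.withDensity fun x ↦ ENNReal.ofReal (ρ x t) := by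
        rw [integral_withDensity_eq_integral_toReal_smul hρ.ennreal_ofReal (by simp)]
        simp [ENNReal.toReal_ofReal, h.density_nonneg]
    _ = ∫ z, G z ∂γ.map fun q ↦ (displacement t q, q.2 - q.1) := by
        rw [← h.map_prodMk_velocity ht,
          integral_map hv.aemeasurable hG.aestronglyMeasurable]
    _ = ∫ q, G (displacement t q, q.2 - q.1) ∂γ :=
        integral_map (Measurable.aemeasurable (by fun_prop)) hG.aestronglyMeasurable

lemma lintegral_action (h : IsEulerianDescription μ γ ρ v) [SFinite μ] :
    ∫⁻ z, ENNReal.ofReal (ρ z.1 z.2 * ‖v z.1 z.2‖ ^ 2)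
        ∂(μ.prod (volume.restrict (Icc (0 : ℝ) 1))) =
      ∫⁻ q, ENNReal.ofReal (‖q.1 - q.2‖ ^ 2) ∂γ := by
  have hmeas : Measurable fun z : E × ℝ ↦ ENNReal.ofReal (ρ z.1 z.2 * ‖v z.1 z.2‖ ^ 2) :=
    (h.measurable_density.mul (h.measurable_velocity.norm.pow_const 2)).ennreal_ofReal
  have hslice (t) (ht : t ∈ Ioo (0 : ℝ) 1) :
      ∫⁻ x, ENNReal.ofReal (ρ x t * ‖v x t‖ ^ 2) ∂μ =
        ∫⁻ q, ENNReal.ofReal (‖q.1 - q.2‖ ^ 2) ∂γ := by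
    simp only [ENNReal.ofReal_mul (h.density_nonneg _ _), norm_sub_rev (Prod.fst _)]
    exact h.lintegral_density_mul ht (G := fun z ↦ ENNReal.ofReal (‖z.2‖ ^ 2)) (by fun_prop)
  rw [lintegral_prod_symm' _ hmeas, Measure.restrict_congr_set Ioo_ae_eq_Icc.symm,
    setLIntegral_congr_fun measurableSet_Ioo hslice]
  simp

end IsEulerianDescription

end LagrangianCoordinates

section WeakFormulation

variable {E F : Type*} [NormedAddCommGroup E] [InnerProductSpace ℝ E] [NormedAddCommGroup F]
  [NormedSpace ℝ F] {U : E × ℝ → F}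

lemma hasDerivAt_displacement (q : E × E) (t : ℝ) :
    HasDerivAt (fun t ↦ displacement t q) (q.2 - q.1) t := by
  have h := (((hasDerivAt_id t).const_sub 1).smul_const q.1).add
    ((hasDerivAt_id t).smul_const q.2)
  exact h.congr_deriv (by module)

lemma setIntegral_fderiv_trajectory_eq_zero (hU : ContDiff ℝ 1 U)
    (hU_supp : tsupport U ⊆ univ ×ˢ Ioo 0 1) (L : F →L[ℝ] ℝ) (q : E × E) :
    ∫ t in Icc (0 : ℝ) 1, L (fderiv ℝ U (displacement t q, t) (q.2 - q.1, 1)) = 0 := by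
  have hderiv (t : ℝ) : HasDerivAt (fun t ↦ L (U (displacement t q, t)))
      (L (fderiv ℝ U (displacement t q, t) (q.2 - q.1, 1))) t :=
    L.hasFDerivAt.comp_hasDerivAt t <|
      (hU.differentiable one_ne_zero (displacement t q, t)).hasFDerivAt.comp_hasDerivAt
        (f := fun t ↦ (displacement t q, t)) t
        ((hasDerivAt_displacement q t).prodMk (hasDerivAt_id t))
  have hU_zero (x : E) {t : ℝ} (ht : t ∉ Ioo (0 : ℝ) 1) : U (x, t) = 0 :=
    image_eq_zero_of_notMem_tsupport fun hx ↦ ht (hU_supp hx).2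
  have hcont : Continuous fun t : ℝ ↦ L (fderiv ℝ U (displacement t q, t) (q.2 - q.1, 1)) := by
    have := hU.continuous_fderiv one_ne_zero
    fun_prop
  rw [integral_Icc_eq_integral_Ioc, ← intervalIntegral.integral_of_le zero_le_one,
    intervalIntegral.integral_eq_sub_of_hasDerivAt (fun t _ ↦ hderiv t)
      (hcont.intervalIntegrable _ _),
    hU_zero _ (by simp), hU_zero _ (by simp), sub_self]

lemma integral_fderiv_displacement_eq_zero [MeasurableSpace E] [BorelSpace E]
    [SecondCountableTopology E] {γ : Measure (E × E)} [IsFiniteMeasure γ] {K : Set (E × E)}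
    (hK : IsCompact K) (hγK : ∀ᵐ q ∂γ, q ∈ K) (hU : ContDiff ℝ 1 U)
    (hU_supp : tsupport U ⊆ univ ×ˢ Ioo 0 1) {B : E → F →L[ℝ] ℝ} (hB : Continuous B) :
    ∫ t in Icc (0 : ℝ) 1, ∫ q,
      B (q.2 - q.1) (fderiv ℝ U (displacement t q, t) (q.2 - q.1, 1)) ∂γ = 0 := by
  have hcont : Continuous fun p : ℝ × E × E ↦
      B (p.2.2 - p.2.1) (fderiv ℝ U (displacement p.1 p.2, p.1) (p.2.2 - p.2.1, 1)) := by
    have := hU.continuous_fderiv one_ne_zero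
    fun_prop
  have hmem : ∀ᵐ p ∂(volume.restrict (Icc (0 : ℝ) 1)).prod γ, p ∈ Icc (0 : ℝ) 1 ×ˢ K := by
    rw [← Measure.restrict_eq_self_of_ae_mem hγK, Measure.prod_restrict]
    exact ae_restrict_mem (measurableSet_Icc.prod hK.measurableSet)
  rw [integral_integral_swap
    (integrable_of_continuous_of_ae_mem_isCompact hcont (isCompact_Icc.prod hK) hmem)]
  simp [setIntegral_fderiv_trajectory_eq_zero hU hU_supp]

lemma deriv_add_fderiv_eq_fderiv_uncurry {w : E → ℝ → F} {x : E} {t : ℝ}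
    (hw : DifferentiableAt ℝ (fun z : E × ℝ ↦ w z.1 z.2) (x, t)) (u : E) :
    deriv (fun s ↦ w x s) t + fderiv ℝ (fun y ↦ w y t) x u =
      fderiv ℝ (fun z : E × ℝ ↦ w z.1 z.2) (x, t) (u, 1) := by
  have htime : HasDerivAt (fun s ↦ w x s) (fderiv ℝ (fun z : E × ℝ ↦ w z.1 z.2) (x, t) (0, 1)) t :=
    hw.hasFDerivAt.comp_hasDerivAt (f := fun s ↦ (x, s)) t
      ((hasDerivAt_const t x).prodMk (hasDerivAt_id t))
  have hspace := hw.hasFDerivAt.comp (f := fun y ↦ (y, t)) x (hasFDerivAt_prodMk_left x t)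
  rw [htime.deriv, HasFDerivAt.fderiv (f := fun y ↦ w y t) hspace,
    ContinuousLinearMap.comp_apply, ContinuousLinearMap.inl_apply, ← map_add]
  simp

namespace IsEulerianDescription

variable [MeasurableSpace E] [BorelSpace E] [SecondCountableTopology E] {μ : Measure E}
  {γ : Measure (E × E)} [IsFiniteMeasure γ] {ρ : E → ℝ → ℝ} {v : E → ℝ → E} {K : Set (E × E)}

/-- Both equations of the pressureless Euler system are instances, with `B` constant and with
`B u = ⟪u, ·⟫`. -/
lemma integral_material_derivative_eq_zero (h : IsEulerianDescription μ γ ρ v)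
    (hK : IsCompact K) (hγK : ∀ᵐ q ∂γ, q ∈ K) {B : E → F →L[ℝ] ℝ} (hB : Continuous B)
    {w : E → ℝ → F} (hw : ContDiff ℝ 1 fun z : E × ℝ ↦ w z.1 z.2)
    (hw_supp : tsupport (fun z : E × ℝ ↦ w z.1 z.2) ⊆ univ ×ˢ Ioo 0 1) :
    ∫ t in Icc (0 : ℝ) 1, ∫ x, ρ x t *
      B (v x t) (deriv (fun s ↦ w x s) t + fderiv ℝ (fun y ↦ w y t) x (v x t)) ∂μ = 0 := by
  have := hw.continuous_fderiv one_ne_zero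
  refine Eq.trans ?_ (integral_fderiv_displacement_eq_zero hK hγK hw hw_supp hB)
  simp only [integral_Icc_eq_integral_Ioo]
  refine setIntegral_congr_fun measurableSet_Ioo fun t ht ↦ ?_
  simp only [deriv_add_fderiv_eq_fderiv_uncurry (hw.differentiable one_ne_zero _)]
  exact h.integral_density_mul ht
    (G := fun z ↦ B z.2 (fderiv ℝ (fun z : E × ℝ ↦ w z.1 z.2) (z.1, t) (z.2, 1)))
    (Continuous.measurable (by fun_prop))

lemma continuity_equation [CompleteSpace E] (h : IsEulerianDescription μ γ ρ v)
    (hK : IsCompact K) (hγK : ∀ᵐ q ∂γ, q ∈ K) {f : E → ℝ → ℝ}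
    (hf : ContDiff ℝ 1 fun z : E × ℝ ↦ f z.1 z.2)
    (hf_supp : tsupport (fun z : E × ℝ ↦ f z.1 z.2) ⊆ univ ×ˢ Ioo 0 1) :
    ∫ t in Icc (0 : ℝ) 1, ∫ x, ρ x t *
      (deriv (fun s ↦ f x s) t + ⟪v x t, gradient (fun y ↦ f y t) x⟫) ∂μ = 0 := by
  simp only [inner_gradient_right, conj_trivial]
  exact h.integral_material_derivative_eq_zero hK hγK
    (B := fun _ ↦ ContinuousLinearMap.id ℝ ℝ) continuous_const hf hf_supp

lemma momentum_equation (h : IsEulerianDescription μ γ ρ v) (hK : IsCompact K)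
    (hγK : ∀ᵐ q ∂γ, q ∈ K) {w : E → ℝ → E} (hw : ContDiff ℝ 1 fun z : E × ℝ ↦ w z.1 z.2)
    (hw_supp : tsupport (fun z : E × ℝ ↦ w z.1 z.2) ⊆ univ ×ˢ Ioo 0 1) :
    ∫ t in Icc (0 : ℝ) 1, ∫ x, ρ x t *
      ⟪v x t, deriv (fun s ↦ w x s) t + fderiv ℝ (fun y ↦ w y t) x (v x t)⟫ ∂μ = 0 :=
  h.integral_material_derivative_eq_zero hK hγK (innerSL ℝ).continuous hw hw_supp

end IsEulerianDescription

end WeakFormulation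

section Plans

variable {X Y : Type*} [MeasurableSpace X] [MeasurableSpace Y] {π : Measure (X × Y)}

lemma integral_add_eq_integral_map_add_integral_map {a : X → ℝ} {b : Y → ℝ}
    (ha : Integrable a (π.map Prod.fst)) (hb : Integrable b (π.map Prod.snd)) :
    ∫ q, (a q.1 + b q.2) ∂π = ∫ x, a x ∂π.map Prod.fst + ∫ y, b y ∂π.map Prod.snd := by
  rw [integral_map measurable_fst.aemeasurable ha.aestronglyMeasurable,
    integral_map measurable_snd.aemeasurable hb.aestronglyMeasurable]
  exact integral_add (ha.comp_measurable measurable_fst) (hb.comp_measurable measurable_snd)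

lemma ae_mem_prod_iff_ae_map {K : Set X} {L : Set Y} (hK : MeasurableSet K)
    (hL : MeasurableSet L) :
    (∀ᵐ q ∂π, q ∈ K ×ˢ L) ↔ (∀ᵐ x ∂π.map Prod.fst, x ∈ K) ∧ ∀ᵐ y ∂π.map Prod.snd, y ∈ L := by
  rw [ae_map_iff (p := (· ∈ K)) measurable_fst.aemeasurable hK,
    ae_map_iff (p := (· ∈ L)) measurable_snd.aemeasurable hL]
  exact eventually_and

lemma integrable_norm_sub_sq {E : Type*} [NormedAddCommGroup E] [MeasurableSpace E] [BorelSpace E]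
    [SecondCountableTopology E] {π : Measure (E × E)} [IsFiniteMeasure π] {K : Set (E × E)}
    (hK : IsCompact K) (hπ : ∀ᵐ q ∂π, q ∈ K) :
    Integrable (fun q : E × E ↦ ‖q.1 - q.2‖ ^ 2) π :=
  integrable_of_continuous_of_ae_mem_isCompact (by fun_prop) hK hπ

end Plans

section Optimality

variable {E : Type*} [NormedAddCommGroup E] [InnerProductSpace ℝ E] {ψ : E → ℝ} {K L : Set E}

/-- The convex conjugate `ψ* y = sup_x (⟪x, y⟫ - ψ x)` with `x` restricted to `K`. For compact `K`
it is finite and continuous everywhere, so that it can serve as a Kantorovich potential; where the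
supremum is infinite or `K` is empty, `sSup` returns `0`. -/
noncomputable def restrictedConjugate (ψ : E → ℝ) (K : Set E) (y : E) : ℝ :=
  sSup ((fun x ↦ ⟪x, y⟫ - ψ x) '' K)

lemma continuous_restrictedConjugate (hψ : Continuous ψ) (hK : IsCompact K) :
    Continuous (restrictedConjugate ψ K) :=
  hK.continuous_sSup (f := fun y x ↦ ⟪x, y⟫ - ψ x) <| by
    simp only [Function.HasUncurry.uncurry, id]
    fun_prop

lemma inner_sub_le_restrictedConjugate (hψ : Continuous ψ) (hK : IsCompact K) {x : E} (hx : x ∈ K)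
    (y : E) : ⟪x, y⟫ - ψ x ≤ restrictedConjugate ψ K y :=
  le_csSup (hK.image (by fun_prop)).bddAbove (mem_image_of_mem _ hx)

lemma restrictedConjugate_eq_of_mem_subdifferential {x p : E} (hx : x ∈ K)
    (hp : (x, p) ∈ subdifferential ψ) : restrictedConjugate ψ K p = ⟪x, p⟫ - ψ x := by
  refine IsGreatest.csSup_eq ⟨mem_image_of_mem _ hx, ?_⟩
  rintro _ ⟨y, -, rfl⟩
  beta_reduce
  have hy : ψ x + ⟪p, y - x⟫ ≤ ψ y := hp y
  rw [inner_sub_right, real_inner_comm y, real_inner_comm x] at hy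
  linarith

variable [MeasurableSpace E] [BorelSpace E] [SecondCountableTopology E] {γ π : Measure (E × E)}

/-- Kantorovich duality: `x ↦ ‖x‖² - 2 ψ x` and `y ↦ ‖y‖² - 2 ψ* y` add up to at most `‖x - y‖²`,
with equality on the subdifferential of `ψ`. -/
lemma integral_norm_sub_sq_le_of_ae_mem_subdifferential (hψ : Continuous ψ) [IsFiniteMeasure γ]
    [IsFiniteMeasure π] (hK : IsCompact K) (hL : IsCompact L) (hγKL : ∀ᵐ q ∂γ, q ∈ K ×ˢ L)
    (hπKL : ∀ᵐ q ∂π, q ∈ K ×ˢ L) (hγ : ∀ᵐ q ∂γ, q ∈ subdifferential ψ)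
    (hfst : π.map Prod.fst = γ.map Prod.fst) (hsnd : π.map Prod.snd = γ.map Prod.snd) :
    ∫ q, ‖q.1 - q.2‖ ^ 2 ∂γ ≤ ∫ q, ‖q.1 - q.2‖ ^ 2 ∂π := by
  let a (x : E) : ℝ := ‖x‖ ^ 2 - 2 * ψ x
  let b (y : E) : ℝ := ‖y‖ ^ 2 - 2 * restrictedConjugate ψ K y
  have hψ_conj := continuous_restrictedConjugate hψ hK
  obtain ⟨hK_fst, hL_snd⟩ := (ae_mem_prod_iff_ae_map hK.measurableSet hL.measurableSet).1 hγKL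
  have ha : Integrable a (γ.map Prod.fst) :=
    integrable_of_continuous_of_ae_mem_isCompact (by fun_prop) hK hK_fst
  have hb : Integrable b (γ.map Prod.snd) :=
    integrable_of_continuous_of_ae_mem_isCompact (by fun_prop) hL hL_snd
  have hab : Integrable (fun q : E × E ↦ a q.1 + b q.2) π :=
    integrable_of_continuous_of_ae_mem_isCompact (by fun_prop) (hK.prod hL) hπKL
  calc ∫ q, ‖q.1 - q.2‖ ^ 2 ∂γ = ∫ q, (a q.1 + b q.2) ∂γ := by
        refine integral_congr_ae ?_
        filter_upwards [hγKL, hγ] with q hq hq_sub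
        simp only [a, b, norm_sub_sq_real,
          restrictedConjugate_eq_of_mem_subdifferential hq.1 hq_sub]
        ring
    _ = ∫ q, (a q.1 + b q.2) ∂π := by
        rw [integral_add_eq_integral_map_add_integral_map ha hb,
          integral_add_eq_integral_map_add_integral_map (hfst ▸ ha) (hsnd ▸ hb), hfst, hsnd]
    _ ≤ ∫ q, ‖q.1 - q.2‖ ^ 2 ∂π := by
        refine integral_mono_ae hab (integrable_norm_sub_sq (hK.prod hL) hπKL) ?_
        filter_upwards [hπKL] with q hq
        have := inner_sub_le_restrictedConjugate hψ hK hq.1 q.2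
        simp only [a, b, norm_sub_sq_real]
        linarith

lemma lintegral_norm_sub_sq_le_of_ae_mem_subdifferential (hψ : Continuous ψ) [IsFiniteMeasure γ]
    (hK : IsCompact K) (hL : IsCompact L) (hγKL : ∀ᵐ q ∂γ, q ∈ K ×ˢ L)
    (hγ : ∀ᵐ q ∂γ, q ∈ subdifferential ψ)
    (hfst : π.map Prod.fst = γ.map Prod.fst) (hsnd : π.map Prod.snd = γ.map Prod.snd) :
    ∫⁻ q, ENNReal.ofReal (‖q.1 - q.2‖ ^ 2) ∂γ ≤ ∫⁻ q, ENNReal.ofReal (‖q.1 - q.2‖ ^ 2) ∂π := by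
  have : IsFiniteMeasure π :=
    (Measure.isFiniteMeasure_map_iff measurable_fst.aemeasurable).1 (hfst ▸ inferInstance)
  have hπKL : ∀ᵐ q ∂π, q ∈ K ×ˢ L := by
    rw [ae_mem_prod_iff_ae_map hK.measurableSet hL.measurableSet] at hγKL ⊢
    rwa [hfst, hsnd]
  have hcost_nonneg (m : Measure (E × E)) : ∀ᵐ q ∂m, 0 ≤ ‖q.1 - q.2‖ ^ 2 :=
    ae_of_all _ fun _ ↦ sq_nonneg _
  rw [← ofReal_integral_eq_lintegral_ofReal (integrable_norm_sub_sq (hK.prod hL) hγKL)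
      (hcost_nonneg γ),
    ← ofReal_integral_eq_lintegral_ofReal (integrable_norm_sub_sq (hK.prod hL) hπKL)
      (hcost_nonneg π)]
  exact ENNReal.ofReal_le_ofReal <|
    integral_norm_sub_sq_le_of_ae_mem_subdifferential hψ hK hL hγKL hπKL hγ hfst hsnd

end Optimality

lemma W2sq_map_fst_map_snd_eq {d : ℕ} {ψ : EuclideanSpace ℝ (Fin d) → ℝ} (hψ : Continuous ψ)
    {γ : Measure (EuclideanSpace ℝ (Fin d) × EuclideanSpace ℝ (Fin d))} [IsFiniteMeasure γ]
    {K L : Set (EuclideanSpace ℝ (Fin d))} (hK : IsCompact K) (hL : IsCompact L)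
    (hγKL : ∀ᵐ q ∂γ, q ∈ K ×ˢ L) (hγ : ∀ᵐ q ∂γ, q ∈ subdifferential ψ) :
    W2sq (γ.map Prod.fst) (γ.map Prod.snd) = ∫⁻ q, ENNReal.ofReal (‖q.1 - q.2‖ ^ 2) ∂γ := by
  refine IsLeast.csInf_eq ⟨⟨γ, rfl, rfl, rfl⟩, ?_⟩
  rintro _ ⟨π, hfst, hsnd, rfl⟩
  exact lintegral_norm_sub_sq_le_of_ae_mem_subdifferential hψ hK hL hγKL hγ hfst hsnd

section BoundedDensities

variable {X : Type*} [MeasurableSpace X] {μ : Measure X}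

lemma withDensity_ofReal_le_of_le_one {f : X → ℝ} (hf : ∀ x, f x ≤ 1) :
    μ.withDensity (fun x ↦ ENNReal.ofReal (f x)) ≤ μ := by
  simpa using withDensity_mono (μ := μ) (ae_of_all μ fun x ↦ ENNReal.ofReal_le_one.2 (hf x))

lemma ae_withDensity_ofReal_mem_tsupport [TopologicalSpace X] {f : X → ℝ} (hf : Measurable f) :
    ∀ᵐ x ∂μ.withDensity (fun x ↦ ENNReal.ofReal (f x)), x ∈ tsupport f := by
  refine (ae_withDensity_iff hf.ennreal_ofReal).2 (ae_of_all μ fun x hx ↦ ?_)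
  contrapose! hx
  simp [image_eq_zero_of_notMem_tsupport hx]

lemma ae_mem_tsupport_prod_tsupport {Y : Type*} [MeasurableSpace Y] {ν : Measure Y}
    [TopologicalSpace X] [OpensMeasurableSpace X] [TopologicalSpace Y] [OpensMeasurableSpace Y]
    {f : X → ℝ} (hf : Measurable f) {g : Y → ℝ} (hg : Measurable g) {π : Measure (X × Y)}
    (hfst : π.map Prod.fst = μ.withDensity fun x ↦ ENNReal.ofReal (f x))
    (hsnd : π.map Prod.snd = ν.withDensity fun y ↦ ENNReal.ofReal (g y)) :
    ∀ᵐ q ∂π, q ∈ tsupport f ×ˢ tsupport g := by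
  rw [ae_mem_prod_iff_ae_map (isClosed_tsupport f).measurableSet
    (isClosed_tsupport g).measurableSet, hfst, hsnd]
  exact ⟨ae_withDensity_ofReal_mem_tsupport hf, ae_withDensity_ofReal_mem_tsupport hg⟩

end BoundedDensities

section TransportMap

variable {E : Type*} [NormedAddCommGroup E] [InnerProductSpace ℝ E] [MeasurableSpace E]
  [BorelSpace E] [SecondCountableTopology E] {μ : Measure E} {T : E → E}

lemma ae_map_prodMk_mem_subdifferential [CompleteSpace E] {ψ : E → ℝ} (hψ : ConvexOn ℝ univ ψ)
    (hψ_cont : Continuous ψ) (hT : Measurable T) (h : ∀ᵐ x ∂μ, HasGradientAt ψ (T x) x) :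
    ∀ᵐ q ∂μ.map fun x ↦ (x, T x), q ∈ subdifferential ψ :=
  (ae_map_iff (by fun_prop) (isClosed_subdifferential hψ_cont).measurableSet).2 <|
    h.mono fun _ hx ↦ mem_subdifferential_of_hasGradientAt hψ hx

lemma map_displacement_map_prodMk (hT : Measurable T) (t : ℝ) :
    (μ.map fun x ↦ (x, T x)).map (displacement t) = μ.map fun x ↦ (1 - t) • x + t • T x :=
  Measure.map_map (by fun_prop) (by fun_prop)

end TransportMap

/-- **part of Theorem 1.6.** The Wasserstein geodesic (displacement
interpolant) `μ_t = ((1−t)id + tT)_#(ρ₀ dx)` between compactly supported densities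
`ρ₀, ρ₁ : ℝ^d → [0,1]` is realized by a pair `(ρ, v)` with `ρ(·,t) dx = μ_t`, total
action equal to `d_W(ρ₀ dx, ρ₁ dx)² < ∞`, which is a weak solution of the pressureless
Euler system on `ℝ^d × (0,1)`. -/
theorem wasserstein_geodesic_is_pressureless_euler_solution
    (d : ℕ) (ρ₀ ρ₁ : EuclideanSpace ℝ (Fin d) → ℝ)
    (h₀meas : Measurable ρ₀) (h₁meas : Measurable ρ₁)
    (h₀range : ∀ x, ρ₀ x ∈ Icc (0:ℝ) 1) (h₁range : ∀ x, ρ₁ x ∈ Icc (0:ℝ) 1)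
    (h₀supp : HasCompactSupport ρ₀) (h₁supp : HasCompactSupport ρ₁)
    (hint : ∫ x, ρ₀ x = ∫ x, ρ₁ x) (hposint : 0 < ∫ x, ρ₀ x)
    (ψ : EuclideanSpace ℝ (Fin d) → ℝ) (hψconv : ConvexOn ℝ Set.univ ψ)
    (T : EuclideanSpace ℝ (Fin d) → EuclideanSpace ℝ (Fin d)) (hT : Measurable T)
    (hgrad : ∀ᵐ x, HasGradientAt ψ (T x) x)
    (hpush : (volume.withDensity fun x => ENNReal.ofReal (ρ₀ x)).map T =
      volume.withDensity fun x => ENNReal.ofReal (ρ₁ x)) :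
    ∃ (ρ : EuclideanSpace ℝ (Fin d) → ℝ → ℝ)
      (v : EuclideanSpace ℝ (Fin d) → ℝ → EuclideanSpace ℝ (Fin d)),
      Measurable (fun q : EuclideanSpace ℝ (Fin d) × ℝ => ρ q.1 q.2) ∧
      Measurable (fun q : EuclideanSpace ℝ (Fin d) × ℝ => v q.1 q.2) ∧
      (∀ x t, ρ x t ∈ Icc (0:ℝ) 1) ∧
      -- ρ(·,t) dx is the displacement interpolant μ_t for every t ∈ [0,1]
      (∀ t ∈ Icc (0:ℝ) 1,
        volume.withDensity (fun x => ENNReal.ofReal (ρ x t)) =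
          (volume.withDensity fun x => ENNReal.ofReal (ρ₀ x)).map
            (fun x => (1 - t) • x + t • T x)) ∧
      -- the action equals the squared Wasserstein distance and is finite
      ((∫⁻ q, ENNReal.ofReal (ρ q.1 q.2 * ‖v q.1 q.2‖ ^ 2)
          ∂((volume : Measure (EuclideanSpace ℝ (Fin d))).prod
              (volume.restrict (Icc (0:ℝ) 1)))) =
        W2sq (volume.withDensity fun x => ENNReal.ofReal (ρ₀ x))
          (volume.withDensity fun x => ENNReal.ofReal (ρ₁ x)) ∧
        W2sq (volume.withDensity fun x => ENNReal.ofReal (ρ₀ x))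
          (volume.withDensity fun x => ENNReal.ofReal (ρ₁ x)) < ⊤) ∧
      -- weak continuity equation on ℝ^d × (0,1)
      (∀ q : EuclideanSpace ℝ (Fin d) → ℝ → ℝ,
        ContDiff ℝ (⊤ : ℕ∞) (fun z : EuclideanSpace ℝ (Fin d) × ℝ => q z.1 z.2) →
        HasCompactSupport (fun z : EuclideanSpace ℝ (Fin d) × ℝ => q z.1 z.2) →
        tsupport (fun z : EuclideanSpace ℝ (Fin d) × ℝ => q z.1 z.2) ⊆
          Set.univ ×ˢ Ioo (0:ℝ) 1 →
        (∫ t in Icc (0:ℝ) 1, ∫ x, ρ x t *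
            (deriv (fun s => q x s) t + ⟪v x t, gradient (fun y => q y t) x⟫)) = 0) ∧
      -- weak momentum equation on ℝ^d × (0,1)
      (∀ w : EuclideanSpace ℝ (Fin d) → ℝ → EuclideanSpace ℝ (Fin d),
        ContDiff ℝ (⊤ : ℕ∞) (fun z : EuclideanSpace ℝ (Fin d) × ℝ => w z.1 z.2) →
        HasCompactSupport (fun z : EuclideanSpace ℝ (Fin d) × ℝ => w z.1 z.2) →
        tsupport (fun z : EuclideanSpace ℝ (Fin d) × ℝ => w z.1 z.2) ⊆
          Set.univ ×ˢ Ioo (0:ℝ) 1 →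
        (∫ t in Icc (0:ℝ) 1, ∫ x, ρ x t *
            ⟪v x t, deriv (fun s => w x s) t +
              fderiv ℝ (fun y => w y t) x (v x t)⟫) = 0) := by
  have hψ : Continuous ψ := continuousOn_univ.1 (hψconv.continuousOn isOpen_univ)
  set μ₀ := volume.withDensity fun x ↦ ENNReal.ofReal (ρ₀ x)
  set μ₁ := volume.withDensity fun x ↦ ENNReal.ofReal (ρ₁ x)
  have : IsFiniteMeasure μ₀ :=
    isFiniteMeasure_withDensity_ofReal (Integrable.of_integral_ne_zero hposint.ne').2
  let γ := μ₀.map fun x ↦ (x, T x)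
  have hfst : γ.map Prod.fst = μ₀ := (Measure.fst_map_prodMk hT).trans Measure.map_id
  have hsnd : γ.map Prod.snd = μ₁ := (Measure.snd_map_prodMk measurable_id).trans hpush
  have hγ : ∀ᵐ q ∂γ, q ∈ subdifferential ψ := ae_map_prodMk_mem_subdifferential hψconv hψ hT
    ((withDensity_absolutelyContinuous _ _).ae_le hgrad)
  have hγK : ∀ᵐ q ∂γ, q ∈ tsupport ρ₀ ×ˢ tsupport ρ₁ :=
    ae_mem_tsupport_prod_tsupport h₀meas h₁meas hfst hsnd
  have hK := h₀supp.isCompact.prod h₁supp.isCompact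
  have hcost : W2sq μ₀ μ₁ = ∫⁻ q, ENNReal.ofReal (‖q.1 - q.2‖ ^ 2) ∂γ :=
    hfst ▸ hsnd ▸ W2sq_map_fst_map_snd_eq hψ h₀supp.isCompact h₁supp.isCompact hγK hγ
  obtain ⟨ρ, v, h, hρ⟩ := exists_isEulerianDescription (μ := volume) hψconv hγ
    (hfst.trans_le (withDensity_ofReal_le_of_le_one fun x ↦ (h₀range x).2))
    (hsnd.trans_le (withDensity_ofReal_le_of_le_one fun x ↦ (h₁range x).2))
  have hsmooth : (1 : WithTop ℕ∞) ≤ (⊤ : ℕ∞) := by exact_mod_cast le_top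
  exact ⟨ρ, v, h.measurable_density, h.measurable_velocity,
    fun x t ↦ ⟨h.density_nonneg x t, hρ x t⟩,
    fun t ht ↦ (h.withDensity_eq t ht).trans (map_displacement_map_prodMk hT t),
    ⟨h.lintegral_action.trans hcost.symm,
      hcost.trans_lt (integrable_norm_sub_sq hK hγK).lintegral_lt_top⟩,
    fun f hf _ hf_supp ↦ h.continuity_equation hK hγK (hf.of_le hsmooth) hf_supp,
    fun w hw _ hw_supp ↦ h.momentum_equation hK hγK (hw.of_le hsmooth) hw_supp⟩
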